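/- With s_k the number of simple permutations in A_k, for n ≥ 2, a_n = ∑ over compositions (x_1,…,x_k) of n−1 of the product s_{x_1+1} s_{x_2+1} ⋯ s_{x_k+1}. -/

import Mathlib

/-- Occurrence of the vincular pattern ⟨32⟩⟨41⟩: two disjoint adjacent pairs, in this
order, order-isomorphic to 3241. -/
def P3241 {n : ℕ} (π : Equiv.Perm (Fin n)) : Prop :=
  ∃ i i' j j' : Fin n, (i' : ℕ) = (i : ℕ) + 1 ∧ (j' : ℕ) = (j : ℕ) + 1 ∧
    (i' : ℕ) < (j : ℕ) ∧ π j' < π i' ∧ π i' < π i ∧ π i < π j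

/-- Occurrence of the vincular pattern ⟨14⟩⟨23⟩. -/
def P1423 {n : ℕ} (π : Equiv.Perm (Fin n)) : Prop :=
  ∃ i i' j j' : Fin n, (i' : ℕ) = (i : ℕ) + 1 ∧ (j' : ℕ) = (j : ℕ) + 1 ∧
    (i' : ℕ) < (j : ℕ) ∧ π i < π j ∧ π j < π j' ∧ π j' < π i'

/-- Occurrence of the vincular pattern ⟨41⟩⟨32⟩. -/
def P4132 {n : ℕ} (π : Equiv.Perm (Fin n)) : Prop :=
  ∃ i i' j j' : Fin n, (i' : ℕ) = (i : ℕ) + 1 ∧ (j' : ℕ) = (j : ℕ) + 1 ∧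
    (i' : ℕ) < (j : ℕ) ∧ π i' < π j' ∧ π j' < π j ∧ π j < π i

/-- Occurrence of the vincular pattern ⟨23⟩⟨14⟩. -/
def P2314 {n : ℕ} (π : Equiv.Perm (Fin n)) : Prop :=
  ∃ i i' j j' : Fin n, (i' : ℕ) = (i : ℕ) + 1 ∧ (j' : ℕ) = (j : ℕ) + 1 ∧
    (i' : ℕ) < (j : ℕ) ∧ π j < π i ∧ π i < π i' ∧ π i' < π j'

/-- Occurrence of the vincular pattern ⟨23⟩⟨1⟩ where the `1` must be the final
entry of `π`. -/
def P231final {n : ℕ} (π : Equiv.Perm (Fin n)) : Prop :=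
  ∃ i i' l : Fin n, (i' : ℕ) = (i : ℕ) + 1 ∧ (l : ℕ) = n - 1 ∧
    (i' : ℕ) < (l : ℕ) ∧ π l < π i ∧ π i < π i'

/-- Occurrence of the vincular pattern ⟨1⟩⟨32⟩ where the `1` must be the first
entry of `π`. -/
def P132initial {n : ℕ} (π : Equiv.Perm (Fin n)) : Prop :=
  ∃ f j j' : Fin n, (f : ℕ) = 0 ∧ (j' : ℕ) = (j : ℕ) + 1 ∧
    0 < (j : ℕ) ∧ π f < π j' ∧ π j' < π j

/-- `π` avoids all six vincular patterns
⟨32⟩⟨41⟩, ⟨14⟩⟨23⟩, ⟨41⟩⟨32⟩, ⟨23⟩⟨14⟩, ⟨23⟩⟨1 final⟩, ⟨1 initial⟩⟨32⟩. -/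
def MemA {n : ℕ} (π : Equiv.Perm (Fin n)) : Prop :=
  ¬ P3241 π ∧ ¬ P1423 π ∧ ¬ P4132 π ∧ ¬ P2314 π ∧ ¬ P231final π ∧ ¬ P132initial π

/-- The positions `i ≤ x ≤ j` form a block (interval) of `π`: the values on those
positions form an interval of values of the same length. -/
def IsPermBlock {k : ℕ} (π : Equiv.Perm (Fin k)) (i j : Fin k) : Prop :=
  ∃ v : ℕ, ∀ x : Fin k, i ≤ x → x ≤ j →
    v ≤ (π x : ℕ) ∧ (π x : ℕ) ≤ v + ((j : ℕ) - (i : ℕ))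

/-- `π` is simple: its only blocks are the singletons and the whole interval. -/
def IsSimplePerm {k : ℕ} (π : Equiv.Perm (Fin k)) : Prop :=
  ∀ i j : Fin k, i ≤ j → IsPermBlock π i j →
    (i = j ∨ ((i : ℕ) = 0 ∧ (j : ℕ) = k - 1))

/-- `a k = |A_k|`. -/
noncomputable def aCard (k : ℕ) : ℕ := Nat.card {π : Equiv.Perm (Fin k) // MemA π}

/-- `s k`: the number of simple permutations in `A_k`. -/
noncomputable def sCard (k : ℕ) : ℕ :=
  Nat.card {π : Equiv.Perm (Fin k) // MemA π ∧ IsSimplePerm π}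

/-!
Read a permutation `π` of `{0, …, n - 1}` as the sequence `n, π 1, …, π n, n, n, …`. The six
patterns together say that some rise of this sequence is strictly nested in another rise, or some
fall in another fall; in the patterns with an initial or a final entry, the outer step leads from
or to the padding.

A nonnesting permutation with a nontrivial block has a nontrivial block containing its smallest
entry. Indeed, suppose that `0` stands before the given block, the other case being symmetric. Some
fall on the way from the initial padding to `0` passes over all values of the block, so the block
has no falls, and its two smallest values `v`, `v + 1` are adjacent. The rise from `v` to `v + 1`
would be nested in any other rise crossing the level `v`, so the values `0, …, v` are contiguous.

Hence contracting the longest proper block containing `0` leaves a simple permutation. Nesting is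
visible in the block or in the quotient, because there is only one way into the block and one way
out of it. This gives `a_{N+1} = ∑_{m < N} s_{N-m+1} a_{m+1}`, and iterating this recurrence
produces the sum over compositions.
-/

/-! ### Nonnesting sequences -/

section Nonnesting

variable {α β : Type*}

/-- No step `g j → g (j + 1)` is nested strictly inside a step `g i → g (i + 1)` going in the
same direction. For a padded permutation this is the avoidance of the six patterns. -/
def IsNonnesting [LT α] (g : ℕ → α) : Prop :=
  ∀ i j, ¬(g i < g j ∧ g j < g (j + 1) ∧ g (j + 1) < g (i + 1)) ∧
    ¬(g (i + 1) < g (j + 1) ∧ g (j + 1) < g j ∧ g j < g i)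

theorem IsNonnesting.comp_monotone [LinearOrder α] [Preorder β] {g : ℕ → α} {f : α → β}
    (hg : IsNonnesting g) (hf : Monotone f) : IsNonnesting (f ∘ g) := fun i j =>
  ⟨fun ⟨h₁, h₂, h₃⟩ => (hg i j).1 ⟨hf.reflect_lt h₁, hf.reflect_lt h₂, hf.reflect_lt h₃⟩,
    fun ⟨h₁, h₂, h₃⟩ => (hg i j).2 ⟨hf.reflect_lt h₁, hf.reflect_lt h₂, hf.reflect_lt h₃⟩⟩

theorem IsNonnesting.of_steps [Preorder α] {g h : ℕ → α} (hg : IsNonnesting g)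
    (hsteps : ∀ x, h x = h (x + 1) ∨ ∃ y, h x = g y ∧ h (x + 1) = g (y + 1)) :
    IsNonnesting h := by
  intro i j
  rcases hsteps i with hi | ⟨i', hi, hi'⟩
  · rw [hi]
    exact ⟨fun ⟨h₁, h₂, h₃⟩ => (h₁.trans (h₂.trans h₃)).false,
      fun ⟨h₁, h₂, h₃⟩ => (h₁.trans (h₂.trans h₃)).false⟩
  rcases hsteps j with hj | ⟨j', hj, hj'⟩
  · rw [hj]
    exact ⟨fun ⟨_, h₂, _⟩ => h₂.false, fun ⟨_, h₂, _⟩ => h₂.false⟩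
  · rw [hi, hi', hj, hj']
    exact hg i' j'

theorem exists_and_not_succ {P : ℕ → Prop} {a b : ℕ} (hab : a ≤ b) (ha : P a) (hb : ¬P b) :
    ∃ i, a ≤ i ∧ i < b ∧ P i ∧ ¬P (i + 1) := by
  induction b, hab using Nat.le_induction with
  | base => exact absurd ha hb
  | succ b hab ih =>
    by_cases hPb : P b
    · exact ⟨b, hab, b.lt_succ_self, hPb, hb⟩
    · obtain ⟨i, hai, hib, hi⟩ := ih hPb
      exact ⟨i, hai, by omega, hi⟩

end Nonnesting

/-! ### Padded permutations and blocks -/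

/-- `g` is the one-line notation `g 1, …, g n` of a permutation of `{0, …, n - 1}`, padded by the
value `n` at all other positions. -/
structure IsPaddedPerm (n : ℕ) (g : ℕ → ℕ) : Prop where
  le : ∀ x, g x ≤ n
  lt_iff : ∀ x, g x < n ↔ 0 < x ∧ x ≤ n
  eq_of_apply_eq : ∀ {x y}, g x < n → g x = g y → x = y

/-- The values `0, …, m` of `g` occupy exactly the positions `a + 1, …, a + m + 1`. -/
def IsLowBlock (g : ℕ → ℕ) (m a : ℕ) : Prop := ∀ x, g x ≤ m ↔ a < x ∧ x ≤ a + m + 1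

/-- Simplicity of a padded permutation of length `n`, tested only on the blocks containing the
value `0`. -/
def IsLowSimple (n : ℕ) (g : ℕ → ℕ) : Prop := ∀ m a, 0 < m → m + 1 < n → ¬IsLowBlock g m a

theorem IsLowBlock.unique {g : ℕ → ℕ} {m a b : ℕ} (ha : IsLowBlock g m a)
    (hb : IsLowBlock g m b) : a = b := by
  have hab := (hb (a + 1)).1 ((ha (a + 1)).2 (by omega))
  have hba := (ha (b + 1)).1 ((hb (b + 1)).2 (by omega))
  omega

namespace IsPaddedPerm

variable {n k l m a v : ℕ} {g : ℕ → ℕ}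

theorem apply_zero (h : IsPaddedPerm n g) : g 0 = n := by
  have := h.le 0
  have := h.lt_iff 0
  omega

theorem apply_of_lt (h : IsPaddedPerm n g) {x : ℕ} (hx : n < x) : g x = n := by
  have := h.le x
  have := h.lt_iff x
  omega

theorem surjOn_Ico (h : IsPaddedPerm n g) (hlk : l + k ≤ n)
    (hw : Set.MapsTo g (Set.Ioc l (l + k)) (Set.Ico v (v + k))) :
    Set.SurjOn g (Set.Ioc l (l + k)) (Set.Ico v (v + k)) := by
  rw [← Finset.coe_Ioc, ← Finset.coe_Ico] at hw ⊢
  refine Finset.surjOn_of_injOn_of_card_le g hw (fun x hx y _ hxy => ?_) (by simp)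
  rw [Finset.mem_coe, Finset.mem_Ioc] at hx
  exact h.eq_of_apply_eq ((h.lt_iff x).2 (by omega)) hxy

theorem exists_apply_eq (h : IsPaddedPerm n g) (hv : v < n) : ∃ x, g x = v := by
  have hw : Set.MapsTo g (Set.Ioc 0 (0 + n)) (Set.Ico 0 (0 + n)) := fun x hx => by
    rw [Nat.zero_add] at hx ⊢
    exact ⟨Nat.zero_le _, (h.lt_iff x).2 hx⟩
  obtain ⟨x, -, hx⟩ := h.surjOn_Ico (by omega) hw (show v ∈ Set.Ico 0 (0 + n) by simpa using hv)
  exact ⟨x, hx⟩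

theorem mem_Ioc_of_apply_mem_Ico (h : IsPaddedPerm n g) (hlk : l + k ≤ n)
    (hw : Set.MapsTo g (Set.Ioc l (l + k)) (Set.Ico v (v + k))) {x : ℕ} (hxn : g x < n)
    (hx : g x ∈ Set.Ico v (v + k)) : x ∈ Set.Ioc l (l + k) := by
  obtain ⟨y, hy, hyx⟩ := h.surjOn_Ico hlk hw hx
  rwa [h.eq_of_apply_eq hxn hyx.symm]

theorem exists_isLowBlock (h : IsPaddedPerm n g) (hv : v < n)
    (hconn : (g ⁻¹' Set.Iic v).OrdConnected) : ∃ a, IsLowBlock g v a := by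
  let S := (Finset.Icc 1 n).filter (g · ≤ v)
  have mem_S (x : ℕ) : x ∈ S ↔ g x ≤ v := by
    have := h.lt_iff x
    simp only [S, Finset.mem_filter, Finset.mem_Icc]
    omega
  have card_S : S.card = v + 1 := by
    have hinj : Set.InjOn g S := fun x hx y _ hxy =>
      h.eq_of_apply_eq (((mem_S x).1 hx).trans_lt hv) hxy
    have himage : S.image g = Finset.range (v + 1) := by
      ext u
      simp only [Finset.mem_image, mem_S, Finset.mem_range, Nat.lt_succ_iff]
      refine ⟨fun ⟨_, hx, hxu⟩ => hxu ▸ hx, fun hu => ?_⟩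
      obtain ⟨x, rfl⟩ := h.exists_apply_eq (hu.trans_lt hv)
      exact ⟨x, hu, rfl⟩
    rw [← Finset.card_image_of_injOn hinj, himage, Finset.card_range]
  have hne : S.Nonempty := Finset.card_pos.1 (by omega)
  have le_iff (x : ℕ) : g x ≤ v ↔ S.min' hne ≤ x ∧ x ≤ S.max' hne := by
    refine ⟨fun hx => ⟨S.min'_le x ((mem_S x).2 hx), S.le_max' x ((mem_S x).2 hx)⟩, fun hx => ?_⟩
    exact hconn.out ((mem_S _).1 (S.min'_mem hne)) ((mem_S _).1 (S.max'_mem hne)) hx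
  have hmin : 0 < S.min' hne := (Finset.mem_Icc.1 (Finset.mem_filter.1 (S.min'_mem hne)).1).1
  have hcard : S.max' hne + 1 - S.min' hne = v + 1 := by
    rw [← card_S, ← Nat.card_Icc]
    exact congrArg Finset.card (Finset.ext fun x => by rw [mem_S, le_iff, Finset.mem_Icc])
  refine ⟨S.min' hne - 1, fun x => ?_⟩
  rw [le_iff]
  omega

/-- The rise `v → v + 1` would be nested in any other rise crossing the level `v`. So the sequence
never climbs back above `v` between two values that are at most `v`. -/
theorem exists_isLowBlock_of_consecutive (h : IsPaddedPerm n g) (hg : IsNonnesting g) {p : ℕ}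
    (hp : g p = v) (hp' : g (p + 1) = v + 1) (hv : v + 1 < n) : ∃ a, IsLowBlock g v a := by
  have crossing_eq {i : ℕ} (hi : g i ≤ v) (hi' : ¬g (i + 1) ≤ v) : i = p := by
    by_contra hne
    have : g i ≠ v := fun hiv => hne (h.eq_of_apply_eq (by omega) (hiv.trans hp.symm))
    have : g (i + 1) ≠ v + 1 := fun hiv =>
      hne (Nat.add_right_cancel (h.eq_of_apply_eq (by omega) (hiv.trans hp'.symm)))
    exact (hg i p).1 (by omega)
  refine h.exists_isLowBlock (by omega) ⟨fun x hx z hz y ⟨hxy, hyz⟩ => ?_⟩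
  by_contra hy
  obtain ⟨i, -, hiy, hi, hi'⟩ := exists_and_not_succ (P := (g · ≤ v)) hxy hx hy
  have hzn : z ≤ n := ((h.lt_iff z).1 (lt_of_le_of_lt hz (by omega))).2
  obtain ⟨j, hzj, -, hj, hj'⟩ := exists_and_not_succ (P := (g · ≤ v)) (hzn.trans n.le_succ) hz
    (by rw [h.apply_of_lt n.lt_succ_self]; omega)
  have := crossing_eq hi hi'
  have := crossing_eq hj hj'
  omega

/-- The sequence falls from the padding value `n` to `0` before reaching the block, and one of these
falls passes over all values of the block. -/
theorem strictMonoOn_of_zero_before (h : IsPaddedPerm n g) (hg : IsNonnesting g)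
    (hlk : l + k ≤ n) (hw : Set.MapsTo g (Set.Ioc l (l + k)) (Set.Ico v (v + k)))
    (hv : 0 < v) (hvn : v ≤ n) {z : ℕ} (hz : g z = 0) (hzl : z ≤ l) :
    StrictMonoOn g (Set.Ioc l (l + k)) := by
  obtain ⟨d, -, hdz, hd, hd'⟩ := exists_and_not_succ (P := (v ≤ g ·)) z.zero_le
    (by rw [h.apply_zero]; exact hvn) (by omega)
  refine strictMonoOn_of_lt_add_one Set.ordConnected_Ioc fun x _ hx hx' => ?_
  have hwx := hw hx
  have hwx' := hw hx'
  have hd_above : v + k ≤ g d := by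
    by_contra hdk
    have hdn : g d < n := by
      obtain ⟨y, hy, hyd⟩ := h.surjOn_Ico hlk hw ⟨hd, by omega⟩
      rw [← hyd, h.lt_iff]
      exact ⟨by have := hy.1; omega, hy.2.trans hlk⟩
    have := (h.mem_Ioc_of_apply_mem_Ico hlk hw hdn ⟨hd, by omega⟩).1
    omega
  rw [Set.mem_Ioc] at hx hx'
  rw [Set.mem_Ico] at hwx hwx'
  have hne : g x ≠ g (x + 1) := fun he =>
    x.succ_ne_self (h.eq_of_apply_eq ((h.lt_iff x).2 (by omega)) he).symm
  have := (hg d x).2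
  omega

theorem not_isLowSimple_of_zero_before (h : IsPaddedPerm n g) (hg : IsNonnesting g)
    (hk : 2 ≤ k) (hlk : l + k ≤ n)
    (hw : Set.MapsTo g (Set.Ioc l (l + k)) (Set.Ico v (v + k))) (hv : 0 < v) {z : ℕ}
    (hz : g z = 0) (hzl : z ≤ l) : ¬IsLowSimple n g := by
  have hsurj := h.surjOn_Ico hlk hw
  obtain ⟨p, hp, hpv⟩ := hsurj (show v ∈ Set.Ico v (v + k) from ⟨le_rfl, by omega⟩)
  obtain ⟨q, hq, hqv⟩ := hsurj (show v + 1 ∈ Set.Ico v (v + k) from ⟨by omega, by omega⟩)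
  have hqn : g q < n := (h.lt_iff q).2 ⟨by have := hq.1; omega, hq.2.trans hlk⟩
  have hmono := h.strictMonoOn_of_zero_before hg hlk hw hv (by omega) hz hzl
  have hpq : p < q := (hmono.lt_iff_lt hp hq).1 (by omega)
  have hq_succ : q = p + 1 := by
    by_contra hne
    have hp' : p + 1 ∈ Set.Ioc l (l + k) := ⟨by have := hp.1; omega, by have := hq.2; omega⟩
    have := hmono hp hp' p.lt_succ_self
    have := hmono hp' hq (by omega)
    omega
  obtain ⟨a, ha⟩ := h.exists_isLowBlock_of_consecutive hg hpv (hq_succ ▸ hqv) (by omega)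
  exact fun hsimple => hsimple v a hv (by omega) ha

theorem reverse (h : IsPaddedPerm n g) : IsPaddedPerm n fun x => g (n + 1 - x) where
  le x := h.le _
  lt_iff x := by rw [h.lt_iff]; omega
  eq_of_apply_eq {x y} hx hxy := by
    have := (h.lt_iff _).1 hx
    have := (h.lt_iff _).1 (hxy ▸ hx)
    have := h.eq_of_apply_eq hx hxy
    omega

theorem isNonnesting_reverse (h : IsPaddedPerm n g) (hg : IsNonnesting g) :
    IsNonnesting fun x => g (n + 1 - x) := by
  have out {x : ℕ} (hx : n < x) : g (n + 1 - x) = n ∧ g (n + 1 - (x + 1)) = n := by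
    rw [show n + 1 - x = 0 by omega, show n + 1 - (x + 1) = 0 by omega]
    exact ⟨h.apply_zero, h.apply_zero⟩
  intro i j
  beta_reduce
  rcases lt_or_ge n i with hi | hi
  · rw [(out hi).1, (out hi).2]
    omega
  rcases lt_or_ge n j with hj | hj
  · rw [(out hj).1, (out hj).2]
    omega
  rw [show n + 1 - i = n - i + 1 by omega, show n + 1 - (i + 1) = n - i by omega,
    show n + 1 - j = n - j + 1 by omega, show n + 1 - (j + 1) = n - j by omega]
  exact (hg (n - i) (n - j)).symm

theorem isLowBlock_of_reverse (h : IsPaddedPerm n g) (hm : m < n)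
    (hb : IsLowBlock (fun x => g (n + 1 - x)) m a) : IsLowBlock g m (n - (a + m + 1)) := by
  have hlast := (h.reverse.lt_iff (a + m + 1)).1 (((hb _).2 (by omega)).trans_lt hm)
  intro x
  rcases le_or_gt x (n + 1) with hx | hx
  · have hbx := hb (n + 1 - x)
    beta_reduce at hbx
    rw [Nat.sub_sub_self hx] at hbx
    omega
  · rw [h.apply_of_lt (by omega)]
    omega

theorem isLowSimple_reverse (h : IsPaddedPerm n g) (hs : IsLowSimple n g) :
    IsLowSimple n fun x => g (n + 1 - x) :=
  fun m _ hm hmn hb => hs m _ hm hmn (h.isLowBlock_of_reverse (by omega) hb)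

theorem not_isLowSimple_of_mapsTo (h : IsPaddedPerm n g) (hg : IsNonnesting g) (hk : 2 ≤ k)
    (hkn : k < n) (hlk : l + k ≤ n)
    (hw : Set.MapsTo g (Set.Ioc l (l + k)) (Set.Ico v (v + k))) : ¬IsLowSimple n g := by
  rcases v.eq_zero_or_pos with rfl | hv
  · refine fun hsimple => hsimple (k - 1) l (by omega) (by omega) fun x =>
      ⟨fun hx => ?_, fun hx => ?_⟩
    · have := h.mem_Ioc_of_apply_mem_Ico hlk hw (x := x) (by omega) ⟨by omega, by omega⟩
      rw [Set.mem_Ioc] at this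
      omega
    · have := (hw (show x ∈ Set.Ioc l (l + k) from ⟨hx.1, by omega⟩)).2
      omega
  obtain ⟨z, hz⟩ := h.exists_apply_eq (show 0 < n by omega)
  rcases le_or_gt z l with hzl | hzl
  · exact h.not_isLowSimple_of_zero_before hg hk hlk hw hv hz hzl
  have hzn := ((h.lt_iff z).1 (by omega)).2
  have hzlk : l + k < z := by
    by_contra hle
    have := (hw (show z ∈ Set.Ioc l (l + k) from ⟨hzl, by omega⟩)).1
    omega
  have hw_reverse : Set.MapsTo (fun x => g (n + 1 - x))
      (Set.Ioc (n - (l + k)) (n - (l + k) + k)) (Set.Ico v (v + k)) := fun x hx => hw <| by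
    rw [Set.mem_Ioc] at hx ⊢
    omega
  have hz_reverse : g (n + 1 - (n + 1 - z)) = 0 := by rw [Nat.sub_sub_self (by omega), hz]
  exact mt h.isLowSimple_reverse <| h.reverse.not_isLowSimple_of_zero_before
    (h.isNonnesting_reverse hg) hk (by omega) hw_reverse hv hz_reverse (by omega)

end IsPaddedPerm

/-! ### Inflations -/

/-- The map contracting the positions `a + 1, …, a + m + 1` to the single position `a + 1`. -/
def collapse (m a x : ℕ) : ℕ := max (min x (a + 1)) (x - m)

theorem collapse_succ (m a x : ℕ) :
    collapse m a (x + 1) = collapse m a x ∨ collapse m a (x + 1) = collapse m a x + 1 := by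
  unfold collapse
  omega

theorem exists_collapse_eq (m a x : ℕ) :
    ∃ y, collapse m a y = x ∧ collapse m a (y + 1) = x + 1 := by
  refine ⟨if x ≤ a then x else x + m, ?_⟩
  unfold collapse
  split_ifs <;> omega

/-- `g` is obtained from `σ` by replacing its value `0`, at position `a + 1`, by the sequence `α`
of length `m + 1`, and raising all other values by `m`. Truncating the values of `g` from above
and from below recovers `α` and `σ`. -/
structure IsInflation (m a : ℕ) (σ α g : ℕ → ℕ) : Prop where
  zero : IsLowBlock σ 0 a
  min_apply : ∀ x, min (g x) (m + 1) = α (x - a)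
  apply_sub : ∀ x, g x - m = σ (collapse m a x)

/-- The inflation of the value `0` of `σ`, at position `a + 1`, by `α` of length `m + 1`: away from
the block `α` contributes its padding value `m + 1`, inside the block `σ` contributes
`0 - 1 = 0`. -/
def inflate (m a : ℕ) (σ α : ℕ → ℕ) (x : ℕ) : ℕ := α (x - a) + (σ (collapse m a x) - 1)

theorem isInflation_inflate {m a : ℕ} {σ α : ℕ → ℕ} (hσ : IsLowBlock σ 0 a)
    (hα : IsPaddedPerm (m + 1) α) : IsInflation m a σ α (inflate m a σ α) := by
  have key (x : ℕ) : (α (x - a) ≤ m ∧ σ (collapse m a x) = 0) ∨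
      (α (x - a) = m + 1 ∧ 0 < σ (collapse m a x)) := by
    have := hα.le (x - a)
    have := hα.lt_iff (x - a)
    have := hσ (collapse m a x)
    unfold collapse at *
    omega
  refine ⟨hσ, fun x => ?_, fun x => ?_⟩ <;>
  · have := key x
    unfold inflate
    omega

theorem exists_isInflation {m a : ℕ} {g : ℕ → ℕ} (hb : IsLowBlock g m a) :
    ∃ σ α, IsInflation m a σ α g := by
  refine ⟨fun x => g (if x ≤ a then x else x + m) - m, fun x => min (g (x + a)) (m + 1),
    fun x => ?_, fun x => ?_, fun x => ?_⟩
  · have := hb (if x ≤ a then x else x + m)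
    split_ifs at * <;> omega
  · rcases le_total a x with hx | hx
    · rw [Nat.sub_add_cancel hx]
    · have := hb x
      have := hb a
      rw [Nat.sub_eq_zero_of_le hx, Nat.zero_add]
      omega
  · by_cases hx : g x ≤ m
    · have hc : collapse m a x = a + 1 := by
        have := hb x
        unfold collapse
        omega
      have := hb (a + 1 + m)
      rw [hc, if_neg (by omega)]
      omega
    · have hc : (if collapse m a x ≤ a then collapse m a x else collapse m a x + m) = x := by
        have := hb x
        unfold collapse
        split_ifs <;> omega
      rw [hc]

namespace IsInflation

variable {i m a : ℕ} {σ α g : ℕ → ℕ}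

theorem isLowBlock_add_iff (h : IsInflation m a σ α g) {l b : ℕ} :
    IsLowBlock g (l + m) b ↔ IsLowBlock σ l b := by
  have le_iff (x : ℕ) : g x ≤ l + m ↔ σ (collapse m a x) ≤ l := by
    rw [← h.apply_sub]
    omega
  constructor <;> intro hb
  · have le_of_collapse_eq {x : ℕ} (hx : collapse m a x = a + 1) : g x ≤ l + m :=
      (le_iff x).2 (((h.zero _).2 (by omega)).trans l.zero_le)
    have hfirst := (hb (a + 1)).1 (le_of_collapse_eq (by unfold collapse; omega))
    have hlast := (hb (a + m + 1)).1 (le_of_collapse_eq (by unfold collapse; omega))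
    intro x
    obtain ⟨y, rfl, -⟩ := exists_collapse_eq m a x
    rw [← le_iff, hb]
    unfold collapse
    omega
  · have hzero := (hb (a + 1)).1 (((h.zero _).2 (by omega)).trans l.zero_le)
    intro x
    rw [le_iff, hb]
    unfold collapse
    omega

theorem isLowBlock (h : IsInflation m a σ α g) : IsLowBlock g m a := by
  simpa using h.isLowBlock_add_iff.2 h.zero

theorem inflate_eq (h : IsInflation m a σ α g) : inflate m a σ α = g := by
  ext x
  rw [inflate, ← h.min_apply, ← h.apply_sub]
  omega

theorem unique {a' : ℕ} {σ' α' : ℕ → ℕ} (h : IsInflation m a σ α g)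
    (h' : IsInflation m a' σ' α' g) : σ = σ' ∧ α = α' := by
  obtain rfl := h.isLowBlock.unique h'.isLowBlock
  refine ⟨funext fun x => ?_, funext fun x => ?_⟩
  · obtain ⟨y, rfl, -⟩ := exists_collapse_eq m a x
    rw [← h.apply_sub, h'.apply_sub]
  · have := h.min_apply (x + a)
    rw [h'.min_apply, Nat.add_sub_cancel] at this
    exact this.symm

/-- Only one step of `g` enters the block and only one leaves it. Any other step stays inside or
outside the block, so that whatever it is nested in can be seen in `α` or in `σ`. -/
theorem isNonnesting_iff (h : IsInflation m a σ α g) :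
    IsNonnesting g ↔ IsNonnesting σ ∧ IsNonnesting α := by
  refine ⟨fun hg => ⟨?_, ?_⟩, fun ⟨hσ, hα⟩ => ?_⟩
  · refine (hg.comp_monotone (f := (· - m)) fun _ _ h => Nat.sub_le_sub_right h m).of_steps
      fun x => .inr ?_
    obtain ⟨y, hy, hy'⟩ := exists_collapse_eq m a x
    exact ⟨y, by simp [h.apply_sub, hy], by simp [h.apply_sub, hy']⟩
  · refine (hg.comp_monotone (f := (min · (m + 1))) fun _ _ h => min_le_min_right _ h).of_steps
      fun x => .inr ⟨x + a, ?_, ?_⟩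
    · simp [h.min_apply]
    · simp [h.min_apply, show x + a + 1 - a = x + 1 by omega]
  · have hlow : IsNonnesting fun x => min (g x) (m + 1) := by
      refine hα.of_steps fun x => ?_
      simp only [h.min_apply]
      rcases le_or_gt a x with hx | hx
      · exact .inr ⟨x - a, rfl, congrArg α (by omega)⟩
      · exact .inl (congrArg α (by omega))
    have hhigh : IsNonnesting fun x => g x - m := by
      refine hσ.of_steps fun x => ?_
      simp only [h.apply_sub]
      exact (collapse_succ m a x).imp (fun hx => congrArg σ hx.symm)
        fun hx => ⟨_, rfl, congrArg σ hx⟩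
    intro i j
    have hij : i = j → g i = g j := congrArg g
    have hlow_ij := hlow i j
    have hhigh_ij := hhigh i j
    beta_reduce at hlow_ij hhigh_ij
    have := h.isLowBlock i
    have := h.isLowBlock (i + 1)
    have := h.isLowBlock j
    have := h.isLowBlock (j + 1)
    omega

theorem isPaddedPerm (h : IsInflation m a σ α g) (hσ : IsPaddedPerm i σ)
    (hα : IsPaddedPerm (m + 1) α) : IsPaddedPerm (i + m) g := by
  have hi : a + 1 ≤ i := by
    have := hσ.lt_iff (a + 1)
    have := h.zero (a + 1)
    have := h.zero 0
    have := hσ.le 0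
    omega
  have key (x : ℕ) : g x ≤ i + m ∧ (g x < i + m ↔ 0 < x ∧ x ≤ i + m) := by
    have := h.apply_sub x
    have := h.isLowBlock x
    have := hσ.le (collapse m a x)
    have := hσ.lt_iff (collapse m a x)
    unfold collapse at *
    omega
  refine ⟨fun x => (key x).1, fun x => (key x).2, fun {x y} hx hxy => ?_⟩
  have hα_eq := hα.eq_of_apply_eq (x := x - a) (y := y - a)
  have hσ_eq := hσ.eq_of_apply_eq (x := collapse m a x) (y := collapse m a y)
  rw [← h.min_apply, ← h.min_apply, hxy] at hα_eq
  rw [← h.apply_sub, ← h.apply_sub, hxy] at hσ_eq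
  have := h.isLowBlock x
  have := h.isLowBlock y
  unfold collapse at hσ_eq
  omega

theorem isPaddedPerm_outer (h : IsInflation m a σ α g) (hg : IsPaddedPerm (i + m) g) :
    IsPaddedPerm i σ := by
  have hi : a + 1 ≤ i := by
    have := hg.lt_iff (a + m + 1)
    have := h.isLowBlock (a + m + 1)
    have := h.isLowBlock 0
    have := hg.le 0
    omega
  have key (x : ℕ) : σ x ≤ i ∧ (σ x < i ↔ 0 < x ∧ x ≤ i) := by
    obtain ⟨y, rfl, -⟩ := exists_collapse_eq m a x
    have := h.apply_sub y
    have := hg.le y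
    have := hg.lt_iff y
    unfold collapse at *
    omega
  refine ⟨fun x => (key x).1, fun x => (key x).2, fun {x y} hx hxy => ?_⟩
  obtain ⟨x, rfl, -⟩ := exists_collapse_eq m a x
  obtain ⟨y, rfl, -⟩ := exists_collapse_eq m a y
  rw [← h.apply_sub] at hx
  rw [← h.apply_sub, ← h.apply_sub] at hxy
  have := hg.eq_of_apply_eq (x := x) (y := y)
  have := h.isLowBlock x
  have := h.isLowBlock y
  unfold collapse
  omega

theorem isPaddedPerm_inner (h : IsInflation m a σ α g) (hg : IsPaddedPerm (i + m) g) :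
    IsPaddedPerm (m + 1) α := by
  have apply_add (x : ℕ) : α x = min (g (x + a)) (m + 1) := by simp [h.min_apply]
  refine ⟨fun x => ?_, fun x => ?_, fun {x y} hx hxy => ?_⟩
  · rw [apply_add]
    exact min_le_right _ _
  · have := h.isLowBlock (x + a)
    rw [apply_add]
    omega
  · rw [apply_add] at hx
    rw [apply_add, apply_add] at hxy
    have := h.isLowBlock 0
    have := hg.le 0
    have := hg.eq_of_apply_eq (x := x + a) (y := y + a)
    omega

theorem le_of_isLowBlock (h : IsInflation m a σ α g) (hs : IsLowSimple i σ) {l b : ℕ}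
    (hb : IsLowBlock g l b) (hl : l + 1 < i + m) : l ≤ m := by
  by_contra hlt
  refine hs (l - m) b (by omega) (by omega) (h.isLowBlock_add_iff.1 ?_)
  rwa [Nat.sub_add_cancel (by omega)]

end IsInflation

/-! ### Permutations of `Fin n` as padded permutations -/

section Padding

variable {n : ℕ}

/-- The padded permutation with one-line notation `π`; positions are counted from `1`, so that
position `0` is available for padding. -/
def padding (π : Equiv.Perm (Fin n)) : ℕ → ℕ
  | 0 => n
  | x + 1 => if h : x < n then π ⟨x, h⟩ else n

theorem padding_succ (π : Equiv.Perm (Fin n)) (x : Fin n) : padding π (x + 1) = π x :=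
  dif_pos x.2

theorem padding_succ_succ (π : Equiv.Perm (Fin n)) {x x' : Fin n} (hx : (x' : ℕ) = x + 1) :
    padding π (x + 1 + 1) = π x' := by
  rw [← hx, padding_succ]

theorem exists_eq_succ {x : ℕ} (hx : 0 < x) (hxn : x ≤ n) : ∃ y : Fin n, x = y + 1 :=
  ⟨⟨x - 1, by omega⟩, (Nat.sub_add_cancel hx).symm⟩

theorem exists_eq_succ_of_padding_lt {π : Equiv.Perm (Fin n)} {x : ℕ} (hx : padding π x < n) :
    ∃ y : Fin n, x = y + 1 := by
  cases x with
  | zero => exact absurd hx n.lt_irrefl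
  | succ x =>
    by_cases hxn : x < n
    · exact ⟨⟨x, hxn⟩, rfl⟩
    · rw [padding, dif_neg hxn] at hx
      exact absurd hx n.lt_irrefl

theorem isPaddedPerm_padding (π : Equiv.Perm (Fin n)) : IsPaddedPerm n (padding π) where
  le x := by
    cases x with
    | zero => exact le_rfl
    | succ x =>
      rw [padding]
      split_ifs
      · exact Fin.is_le'
      · exact le_rfl
  lt_iff x := by
    refine ⟨fun hx => ?_, fun ⟨hx, hxn⟩ => ?_⟩
    · obtain ⟨y, rfl⟩ := exists_eq_succ_of_padding_lt hx
      omega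
    · obtain ⟨y, rfl⟩ := exists_eq_succ hx hxn
      rw [padding_succ]
      exact (π y).2
  eq_of_apply_eq {x y} hx hxy := by
    obtain ⟨x, rfl⟩ := exists_eq_succ_of_padding_lt hx
    obtain ⟨y, rfl⟩ := exists_eq_succ_of_padding_lt (hxy ▸ hx)
    rw [padding_succ, padding_succ] at hxy
    rw [π.injective (Fin.ext hxy)]

theorem bijective_padding : Function.Bijective fun π : Equiv.Perm (Fin n) =>
    (⟨padding π, isPaddedPerm_padding π⟩ : {g // IsPaddedPerm n g}) := by
  refine ⟨fun π ρ h => Equiv.ext fun x => Fin.ext ?_, fun ⟨g, hg⟩ => ?_⟩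
  · rw [← padding_succ, ← padding_succ]
    exact congrFun (Subtype.ext_iff.1 h) (x + 1)
  · let f (x : Fin n) : Fin n := ⟨g (x + 1), (hg.lt_iff _).2 ⟨by omega, x.2⟩⟩
    have hf : Function.Injective f := fun x y hxy => Fin.ext <| Nat.add_right_cancel <|
      hg.eq_of_apply_eq (f x).2 (congrArg Fin.val hxy)
    refine ⟨Equiv.ofBijective f (Finite.injective_iff_bijective.1 hf), Subtype.ext (funext ?_)⟩
    rintro (_ | x)
    · exact hg.apply_zero.symm
    · by_cases hx : x < n
      · simp [padding, hx, f]
      · simp [padding, hx, hg.apply_of_lt (show n < x + 1 by omega)]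

/-- Padding, restricted to the permutations satisfying a given condition. -/
noncomputable def paddingEquiv (P : (ℕ → ℕ) → Prop) :
    {π : Equiv.Perm (Fin n) // P (padding π)} ≃ {g // IsPaddedPerm n g ∧ P g} :=
  ((Equiv.ofBijective _ bijective_padding).subtypeEquiv (q := fun g => P g.1) fun _ =>
    Iff.rfl).trans (Equiv.subtypeSubtypeEquivSubtypeInter _ _)

instance (P : (ℕ → ℕ) → Prop) : Finite {g // IsPaddedPerm n g ∧ P g} :=
  .of_equiv _ (paddingEquiv P)

/-- Only the top of the outer rise can be a padding value, which gives the pattern with a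
final `1`. -/
theorem exists_nested_rise_iff (π : Equiv.Perm (Fin n)) :
    (∃ i j, padding π i < padding π j ∧ padding π j < padding π (j + 1) ∧
      padding π (j + 1) < padding π (i + 1)) ↔ P1423 π ∨ P2314 π ∨ P231final π := by
  have hpad := isPaddedPerm_padding π
  constructor
  · rintro ⟨i, j, hij, hj, hji⟩
    have := hpad.le (i + 1)
    obtain ⟨x, rfl⟩ := exists_eq_succ_of_padding_lt (π := π) (x := i) (by omega)
    obtain ⟨y, rfl⟩ := exists_eq_succ_of_padding_lt (π := π) (x := j) (by omega)
    obtain ⟨y', hy⟩ := exists_eq_succ_of_padding_lt (π := π) (x := y + 1 + 1) (by omega)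
    have hy' : (y' : ℕ) = y + 1 := by omega
    have hxy : (x : ℕ) ≠ y := fun h => by simp [h] at hij
    have hxy' : (x : ℕ) ≠ y + 1 := fun h => by rw [h] at hij; omega
    have hyx' : (y : ℕ) ≠ x + 1 := fun h => by rw [← h] at hji; omega
    rw [padding_succ, padding_succ] at hij
    rw [padding_succ, padding_succ_succ π hy'] at hj
    rw [padding_succ_succ π hy'] at hji
    by_cases hx : (x : ℕ) + 1 < n
    · rw [padding_succ_succ π (x' := ⟨x + 1, hx⟩) rfl] at hji
      rcases Nat.lt_or_gt_of_ne hxy with hlt | hlt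
      · exact .inl ⟨x, ⟨x + 1, hx⟩, y, y', rfl, hy', show (x : ℕ) + 1 < y by omega, hij, hj, hji⟩
      · exact .inr (.inl ⟨y, y', x, ⟨x + 1, hx⟩, hy', rfl, by omega, hij, hj, hji⟩)
    · exact .inr (.inr ⟨y, y', x, hy', by omega, by omega, hij, hj⟩)
  · rintro (⟨x, x', y, y', hx, hy, -, h⟩ | ⟨y, y', x, x', hy, hx, -, h⟩ |
      ⟨y, y', x, hy, hx, -, hxy, hyy⟩)
    iterate 2
      refine ⟨x + 1, y + 1, ?_⟩
      rw [padding_succ, padding_succ, padding_succ_succ π hx, padding_succ_succ π hy]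
      exact h
    refine ⟨x + 1, y + 1, ?_⟩
    rw [hpad.apply_of_lt (x := x + 1 + 1) (by omega), padding_succ, padding_succ,
      padding_succ_succ π hy]
    exact ⟨hxy, hyy, Fin.is_lt _⟩

/-- Only the top of the outer fall can be a padding value, which gives the pattern with an
initial `1`. -/
theorem exists_nested_fall_iff (π : Equiv.Perm (Fin n)) :
    (∃ i j, padding π (i + 1) < padding π (j + 1) ∧ padding π (j + 1) < padding π j ∧
      padding π j < padding π i) ↔ P3241 π ∨ P4132 π ∨ P132initial π := by
  have hpad := isPaddedPerm_padding π
  constructor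
  · rintro ⟨i, j, hij, hj, hji⟩
    have := hpad.le i
    obtain ⟨y, rfl⟩ := exists_eq_succ_of_padding_lt (π := π) (x := j) (by omega)
    obtain ⟨y', hy⟩ := exists_eq_succ_of_padding_lt (π := π) (x := y + 1 + 1) (by omega)
    obtain ⟨x', hx'⟩ := exists_eq_succ_of_padding_lt (π := π) (x := i + 1) (by omega)
    have hy' : (y' : ℕ) = y + 1 := by omega
    obtain rfl : i = x' := by omega
    have hxy : (x' : ℕ) ≠ y + 1 := fun h => by rw [h] at hij; omega
    have hxy' : (x' : ℕ) ≠ y + 1 + 1 := fun h => by rw [h] at hji; omega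
    have hyx' : (x' : ℕ) ≠ y := fun h => by rw [h] at hij; omega
    rw [padding_succ, padding_succ_succ π hy'] at hij
    rw [padding_succ, padding_succ_succ π hy'] at hj
    rw [padding_succ] at hji
    by_cases hx : (x' : ℕ) = 0
    · exact .inr (.inr ⟨x', y, y', hx, hy', by omega, hij, hj⟩)
    · obtain ⟨x, hx⟩ := exists_eq_succ (n := n) (x := x') (by omega) (by omega)
      rw [hx, padding_succ] at hji
      rcases Nat.lt_or_gt_of_ne hxy with hlt | hlt
      · exact .inr (.inl ⟨x, x', y, y', hx, hy', by omega, hij, hj, hji⟩)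
      · exact .inl ⟨y, y', x, x', hy', hx, by omega, hij, hj, hji⟩
  · rintro (⟨y, y', x, x', hy, hx, -, h⟩ | ⟨x, x', y, y', hx, hy, -, h⟩ |
      ⟨x, y, y', hx, hy, -, hxy, hyy⟩)
    iterate 2
      refine ⟨x + 1, y + 1, ?_⟩
      rw [padding_succ, padding_succ, padding_succ_succ π hx, padding_succ_succ π hy]
      exact h
    refine ⟨0, y + 1, ?_⟩
    rw [hpad.apply_zero, padding_succ, padding_succ_succ π hy, ← hx, padding_succ]
    exact ⟨hxy, hyy, (π y).2⟩

theorem memA_iff (π : Equiv.Perm (Fin n)) : MemA π ↔ IsNonnesting (padding π) := by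
  have hrise := exists_nested_rise_iff π
  have hfall := exists_nested_fall_iff π
  simp only [IsNonnesting, forall_and, ← not_exists, hrise, hfall, MemA]
  tauto

theorem isSimplePerm_iff {π : Equiv.Perm (Fin n)} (hπ : IsNonnesting (padding π)) :
    IsSimplePerm π ↔ IsLowSimple n (padding π) := by
  have hpad := isPaddedPerm_padding π
  refine ⟨fun hs m a hm hmn hb => ?_, fun hs i j hij ⟨v, hv⟩ => ?_⟩
  · have hlast := (hpad.lt_iff (a + m + 1)).1 (((hb _).2 (by omega)).trans_lt (by omega))
    have hends := hs ⟨a, by omega⟩ ⟨a + m, by omega⟩ (by simp) ⟨0, fun x hx hx' => ?_⟩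
    · simp only [Fin.mk.injEq] at hends
      omega
    · have hx_low := (hb (x + 1)).2 ⟨Nat.lt_succ_of_le hx, Nat.succ_le_succ hx'⟩
      rw [padding_succ] at hx_low
      simp only
      omega
  · by_contra! hne
    rw [Fin.le_def] at hij
    have hlt : (i : ℕ) ≠ j := fun h => hne.1 (Fin.ext h)
    refine hpad.not_isLowSimple_of_mapsTo hπ (l := i) (k := j - i + 1) (v := v) (by omega)
      (by omega) (by omega) (fun x hx => ?_) hs
    rw [Set.mem_Ioc] at hx
    obtain ⟨y, rfl⟩ := exists_eq_succ (n := n) (x := x) (by omega) (by omega)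
    have := hv y (Fin.le_def.2 (by omega)) (Fin.le_def.2 (by omega))
    rw [padding_succ]
    exact ⟨this.1, by omega⟩

end Padding

/-! ### The decomposition -/

/-- The class `A_n`, as padded permutations. -/
abbrev PaddedA (n : ℕ) : Type := {g : ℕ → ℕ // IsPaddedPerm n g ∧ IsNonnesting g}

/-- The simple permutations of the class `A_n`, as padded permutations. -/
abbrev PaddedSimpleA (n : ℕ) : Type :=
  {g : ℕ → ℕ // IsPaddedPerm n g ∧ IsNonnesting g ∧ IsLowSimple n g}

theorem aCard_eq_card (n : ℕ) : aCard n = Nat.card (PaddedA n) :=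
  (Nat.card_congr (Equiv.subtypeEquivRight memA_iff)).trans (Nat.card_congr (paddingEquiv _))

theorem sCard_eq_card (n : ℕ) : sCard n = Nat.card (PaddedSimpleA n) := by
  refine (Nat.card_congr (Equiv.subtypeEquivRight fun π => ?_)).trans
    (Nat.card_congr (paddingEquiv fun g => IsNonnesting g ∧ IsLowSimple n g))
  rw [memA_iff]
  exact and_congr_right isSimplePerm_iff

/-- The number of entries of `σ` preceding its entry `0`. -/
noncomputable def zeroShift (σ : ℕ → ℕ) : ℕ := sInf {a | σ (a + 1) = 0}

theorem IsPaddedPerm.isLowBlock_zeroShift {n : ℕ} {σ : ℕ → ℕ} (h : IsPaddedPerm n σ)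
    (hn : 0 < n) : IsLowBlock σ 0 (zeroShift σ) := by
  obtain ⟨z, hz⟩ := h.exists_apply_eq hn
  have hz_pos := (h.lt_iff z).1 (by omega)
  have hzero : σ (zeroShift σ + 1) = 0 := Nat.sInf_mem (s := {a | σ (a + 1) = 0})
    ⟨z - 1, (congrArg σ (Nat.sub_add_cancel hz_pos.1)).trans hz⟩
  refine fun x => ⟨fun hx => ?_, fun hx => ?_⟩
  · have := h.eq_of_apply_eq (x := x) (y := zeroShift σ + 1) (by omega) (by omega)
    omega
  · rw [show x = zeroShift σ + 1 by omega, hzero]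

/-- The member of `A_{N+1}` obtained by inflating the entry `0` of a simple permutation in
`A_{N-m+1}` by a member of `A_{m+1}`. -/
noncomputable def inflateSimple {N : ℕ}
    (t : Σ m : Fin N, PaddedSimpleA (N - m + 1) × PaddedA (m + 1)) : ℕ → ℕ :=
  inflate t.1 (zeroShift t.2.1.1) t.2.1.1 t.2.2.1

section Decomposition

variable {N : ℕ}

theorem isInflation_inflateSimple
    (t : Σ m : Fin N, PaddedSimpleA (N - m + 1) × PaddedA (m + 1)) :
    IsInflation t.1 (zeroShift t.2.1.1) t.2.1.1 t.2.2.1 (inflateSimple t) :=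
  isInflation_inflate (t.2.1.2.1.isLowBlock_zeroShift (Nat.succ_pos _)) t.2.2.2.1

theorem inflateSimple_mem (t : Σ m : Fin N, PaddedSimpleA (N - m + 1) × PaddedA (m + 1)) :
    IsPaddedPerm (N + 1) (inflateSimple t) ∧ IsNonnesting (inflateSimple t) := by
  have h := isInflation_inflateSimple t
  refine ⟨?_, h.isNonnesting_iff.2 ⟨t.2.1.2.2.1, t.2.2.2.2⟩⟩
  rw [show N + 1 = N - t.1 + 1 + t.1 by omega]
  exact h.isPaddedPerm t.2.1.2.1 t.2.2.2.1

/-- The inflated block is the largest low block that is not the whole permutation. -/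
theorem injective_inflateSimple : Function.Injective (inflateSimple (N := N)) := by
  intro t t' ht
  have le_of_eq {t t' : Σ m : Fin N, PaddedSimpleA (N - m + 1) × PaddedA (m + 1)}
      (ht : inflateSimple t = inflateSimple t') : (t'.1 : ℕ) ≤ t.1 :=
    (isInflation_inflateSimple t).le_of_isLowBlock t.2.1.2.2.2
      (ht ▸ (isInflation_inflateSimple t').isLowBlock) (by omega)
  have hm : t.1 = t'.1 := Fin.ext ((le_of_eq ht.symm).antisymm (le_of_eq ht))
  obtain ⟨m, σ, α⟩ := t
  obtain ⟨_, σ', α'⟩ := t'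
  obtain rfl : m = _ := hm
  obtain ⟨hσ, hα⟩ : (σ : ℕ → ℕ) = σ' ∧ (α : ℕ → ℕ) = α' :=
    (isInflation_inflateSimple ⟨m, σ, α⟩).unique (ht ▸ isInflation_inflateSimple ⟨m, σ', α'⟩)
  rw [Subtype.ext hσ, Subtype.ext hα]

theorem exists_inflateSimple_eq (hN : 0 < N) {g : ℕ → ℕ} (hg : IsPaddedPerm (N + 1) g)
    (hg' : IsNonnesting g) : ∃ t, inflateSimple (N := N) t = g := by
  obtain ⟨m, ⟨hmN, a, ha⟩, hmax⟩ : ∃ m, IsGreatest {m | m < N ∧ ∃ a, IsLowBlock g m a} m :=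
    BddAbove.exists_isGreatest_of_nonempty ⟨N, fun _ h => h.1.le⟩
      ⟨0, hN, _, hg.isLowBlock_zeroShift N.succ_pos⟩
  obtain ⟨σ, α, h⟩ := exists_isInflation ha
  rw [show N + 1 = N - m + 1 + m by omega] at hg
  have hσ := h.isPaddedPerm_outer hg
  have hs : IsLowSimple (N - m + 1) σ := fun l b hl hlN hb => by
    have := hmax ⟨by omega, b, h.isLowBlock_add_iff.2 hb⟩
    omega
  obtain ⟨hσ', hα'⟩ := h.isNonnesting_iff.1 hg'
  obtain rfl := h.zero.unique (hσ.isLowBlock_zeroShift (Nat.succ_pos _))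
  exact ⟨⟨⟨m, hmN⟩, ⟨σ, hσ, hσ', hs⟩, ⟨α, h.isPaddedPerm_inner hg, hα'⟩⟩, h.inflate_eq⟩

theorem aCard_add_one (hN : 0 < N) :
    aCard (N + 1) = ∑ m : Fin N, sCard (N - m + 1) * aCard (m + 1) := by
  have hbij : Function.Bijective fun t => (⟨inflateSimple t, inflateSimple_mem t⟩ :
      PaddedA (N + 1)) :=
    ⟨fun _ _ h => injective_inflateSimple (Subtype.ext_iff.1 h), fun ⟨_, hg, hg'⟩ =>
      (exists_inflateSimple_eq hN hg hg').imp fun _ => Subtype.ext⟩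
  simp only [aCard_eq_card, sCard_eq_card, ← Nat.card_prod, ← Nat.card_sigma]
  exact (Nat.card_eq_of_bijective _ hbij).symm

end Decomposition

theorem aCard_one : aCard 1 = 1 := by
  have hmem (π : Equiv.Perm (Fin 1)) : MemA π := by
    simp [MemA, P3241, P1423, P4132, P2314, P231final, P132initial, Subsingleton.elim _ (0 : Fin 1)]
  simp [aCard, hmem]

/-! ### Sums over compositions -/

section Composition

variable {n : ℕ}

/-- The composition of `n` obtained by prepending the part `n - m` to a composition of `m < n`. -/
def prependPart (t : Σ m : Fin n, Composition m) : Composition n where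
  blocks := (n - t.1) :: t.2.blocks
  blocks_pos {i} hi := by
    rcases List.mem_cons.1 hi with rfl | hi
    · exact Nat.sub_pos_of_lt t.1.2
    · exact t.2.blocks_pos hi
  blocks_sum := by rw [List.sum_cons, t.2.blocks_sum, Nat.sub_add_cancel t.1.2.le]

theorem bijective_prependPart (hn : 0 < n) : Function.Bijective (prependPart (n := n)) := by
  constructor
  · rintro ⟨⟨m, hm⟩, c⟩ ⟨⟨m', hm'⟩, c'⟩ h
    have hblocks : c.blocks = c'.blocks := (List.cons.inj (congrArg Composition.blocks h)).2
    obtain rfl : m = m' :=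
      c.blocks_sum.symm.trans ((congrArg List.sum hblocks).trans c'.blocks_sum)
    rw [Composition.ext hblocks]
  · intro c
    obtain ⟨x, l, hc⟩ := List.exists_cons_of_ne_nil (mt c.blocks_eq_nil.1 hn.ne')
    have hx := c.blocks_pos (hc ▸ List.mem_cons_self)
    have hsum : x + l.sum = n := by rw [← List.sum_cons, ← hc, c.blocks_sum]
    refine ⟨⟨⟨l.sum, by omega⟩, l, fun hi => c.blocks_pos ?_, rfl⟩, Composition.ext ?_⟩
    · exact hc ▸ List.mem_cons_of_mem _ hi
    · exact (congrArg (· :: l) (Nat.sub_eq_of_eq_add hsum.symm)).trans hc.symm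

theorem eq_sum_composition_of_recurrence {R : Type*} [Semiring R] {a s : ℕ → R} (h₀ : a 0 = 1)
    (h : ∀ n, 0 < n → a n = ∑ m : Fin n, s (n - m) * a m) (n : ℕ) :
    a n = ∑ c : Composition n, (c.blocks.map s).prod := by
  induction n using Nat.strong_induction_on with
  | _ n ih =>
    rcases n.eq_zero_or_pos with rfl | hn
    · have hnil (c : Composition 0) : c.blocks = [] := c.blocks_eq_nil.2 rfl
      have : Unique (Composition 0) := ⟨⟨.ones 0⟩, fun c => Composition.ext (by simp [hnil])⟩
      simp [h₀, hnil]
    · calc a n = ∑ m : Fin n, s (n - m) * a m := h n hn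
        _ = ∑ m : Fin n, ∑ c : Composition m, s (n - m) * (c.blocks.map s).prod := by
          simp only [ih _ (Fin.is_lt _), Finset.mul_sum]
        _ = ∑ t : Σ m : Fin n, Composition m, ((prependPart t).blocks.map s).prod := by
          simp [Fintype.sum_sigma, prependPart]
        _ = ∑ c : Composition n, (c.blocks.map s).prod :=
          (bijective_prependPart hn).sum_comp fun c => (c.blocks.map s).prod

end Composition

/-- For `n ≥ 2`, `a_n = ∑` over compositions `(x_1, …, x_k)` of `n − 1` of
`s_{x_1+1} ⋯ s_{x_k+1}`. -/
theorem aCard_composition_sum (n : ℕ) (hn : 2 ≤ n) :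
    aCard n = ∑ c : Composition (n - 1), (c.blocks.map fun x => sCard (x + 1)).prod := by
  obtain ⟨m, rfl⟩ : ∃ m, n = m + 1 := ⟨n - 1, by omega⟩
  exact eq_sum_composition_of_recurrence (a := fun m => aCard (m + 1)) aCard_one
    (fun _ hN => aCard_add_one hN) m
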